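/- arXiv:2601.15318 — 5 statements merged into one kernel-verified Lean document; each statement's English description precedes it below -/
import Mathlib

section
/- Let v be a TU-game on N = {1,…,n}, let γ_S > 0 be weights for all nonempty proper subsets S of N, and let v* be a closest balanced game to v with respect to these weights. Then v*(S) ≤ v(S) for every nonempty proper subset S of N. -/
open Finset

/-- Sum of an allocation `x` over a coalition `S`: `x(S) = ∑_{i ∈ S} x_i`. -/
def coalSum {n : ℕ} (x : Fin n → ℝ) (S : Finset (Fin n)) : ℝ := ∑ i ∈ S, x i

/-- `x` belongs to the core of the TU-game `v`. -/
def inCore {n : ℕ} (v : Finset (Fin n) → ℝ) (x : Fin n → ℝ) : Prop :=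
  coalSum x Finset.univ = v Finset.univ ∧ ∀ S : Finset (Fin n), v S ≤ coalSum x S

/-- A game is balanced iff its core is nonempty. -/
def IsBalancedGame {n : ℕ} (v : Finset (Fin n) → ℝ) : Prop := ∃ x, inCore v x

/-- The nonempty proper subsets of `N = {1,…,n}`. -/
def propSubsets (n : ℕ) : Finset (Finset (Fin n)) :=
  Finset.univ.filter (fun S => S ≠ ∅ ∧ S ≠ Finset.univ)

/-- Weighted squared distance `∑_{∅≠S⊊N} γ_S (v(S) − w(S))²` between games. -/
def dist2 {n : ℕ} (γ v w : Finset (Fin n) → ℝ) : ℝ :=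
  ∑ S ∈ propSubsets n, γ S * (v S - w S) ^ 2

/-- `w` is a closest balanced game to `v` with respect to the weights `γ`:
`w` is a balanced game with `w(N) = v(N)` minimizing the weighted squared distance
to `v` among all balanced games `u` with `u(N) = v(N)`. -/
def IsClosestBalanced {n : ℕ} (γ v w : Finset (Fin n) → ℝ) : Prop :=
  w ∅ = 0 ∧ IsBalancedGame w ∧ w Finset.univ = v Finset.univ ∧
    ∀ u : Finset (Fin n) → ℝ, u ∅ = 0 → IsBalancedGame u →
      u Finset.univ = v Finset.univ → dist2 γ v w ≤ dist2 γ v u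

section

variable {n : ℕ} {v w γ : Finset (Fin n) → ℝ} {S : Finset (Fin n)}

theorem mem_propSubsets : S ∈ propSubsets n ↔ S ≠ ∅ ∧ S ≠ Finset.univ := by
  simp [propSubsets]

theorem inCore.of_le {u : Finset (Fin n) → ℝ} {x : Fin n → ℝ} (hx : inCore w x)
    (hle : u ≤ w) (huniv : u Finset.univ = w Finset.univ) : inCore u x :=
  ⟨hx.1.trans huniv.symm, fun T ↦ (hle T).trans (hx.2 T)⟩

theorem IsBalancedGame.of_le {u : Finset (Fin n) → ℝ} (hw : IsBalancedGame w)
    (hle : u ≤ w) (huniv : u Finset.univ = w Finset.univ) : IsBalancedGame u :=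
  hw.imp fun _ hx ↦ hx.of_le hle huniv

theorem IsBalancedGame.update (hw : IsBalancedGame w) (hS : S ≠ Finset.univ) {a : ℝ}
    (ha : a ≤ w S) : IsBalancedGame (Function.update w S a) :=
  hw.of_le (update_le_self_iff.mpr ha) (Function.update_of_ne hS.symm a w)

theorem dist2_update_add (γ v w : Finset (Fin n) → ℝ) (hS : S ∈ propSubsets n) :
    dist2 γ v (Function.update w S (v S)) + γ S * (v S - w S) ^ 2 = dist2 γ v w := by
  have off_S : ∀ T ∈ (propSubsets n).erase S,
      γ T * (v T - Function.update w S (v S) T) ^ 2 = γ T * (v T - w T) ^ 2 := by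
    intro T hT
    rw [Function.update_of_ne (Finset.ne_of_mem_erase hT)]
  have at_S : γ S * (v S - Function.update w S (v S) S) ^ 2 = 0 := by
    simp
  rw [dist2, dist2, ← Finset.sum_erase_add _ _ hS, ← Finset.sum_erase_add _ _ hS,
    Finset.sum_congr rfl off_S, at_S, add_zero]

theorem closest_balanced_le_general (hclosest : IsClosestBalanced γ v w)
    (hS : S ∈ propSubsets n) (hγS : 0 < γ S) : w S ≤ v S := by
  obtain ⟨hempty, hbal, huniv, hmin⟩ := hclosest
  obtain ⟨hS_empty, hS_univ⟩ := mem_propSubsets.mp hS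
  by_contra! hlt
  -- Lowering `w S` to `v S` keeps the game balanced and brings it closer to `v`.
  have hdist : dist2 γ v w ≤ dist2 γ v (Function.update w S (v S)) :=
    hmin _ ((Function.update_of_ne hS_empty.symm _ _).trans hempty)
      (hbal.update hS_univ hlt.le) ((Function.update_of_ne hS_univ.symm _ _).trans huniv)
  have hgain : 0 < γ S * (v S - w S) ^ 2 := mul_pos hγS (sq_pos_of_neg (sub_neg.mpr hlt))
  linarith [dist2_update_add γ v w hS]

end

/-- Lemma 1 (Lemma `lem:low`): the closest balanced game satisfies
`v*(S) ≤ v(S)` for every nonempty proper subset `S` of `N`. -/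
theorem closest_balanced_le (n : ℕ) (v vstar γ : Finset (Fin n) → ℝ)
    (hv0 : v ∅ = 0)
    (hγ : ∀ S ∈ propSubsets n, 0 < γ S)
    (hclosest : IsClosestBalanced γ v vstar) :
    ∀ S ∈ propSubsets n, vstar S ≤ v S :=
  fun _ hS ↦ closest_balanced_le_general hclosest hS (hγ _ hS)
end

section
/- Problems (P2) and (P4) are equivalent in the following sense. (i) If x* is an optimal solution of (P4), then the pair (v*, x*) is an optimal solution of (P2), where v* is the game defined by v*(S) = min{x*(S), v(S)} for all nonempty proper subsets S of N and v*(N) = v(N). (ii) If (v*, x*) is an optimal solution of (P2), then x* is an optimal solution of (P4). -/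
open Finset

/-- The objective of Problem (P4):
`g(x) = ∑_{∅≠S⊊N} γ_S (v(S) − x(S))² · 1_{x(S) ≤ v(S)}`. -/
noncomputable def gP4 {n : ℕ} (γ v : Finset (Fin n) → ℝ) (x : Fin n → ℝ) : ℝ :=
  ∑ S ∈ propSubsets n,
    γ S * (v S - coalSum x S) ^ 2 * (if coalSum x S ≤ v S then 1 else 0)

/-- Feasibility for Problem (P2): `w` is a game, `w(S) ≤ x(S)` for all nonempty
proper subsets `S` of `N`, and `w(N) = x(N) = v(N)`. -/
def FeasP2 {n : ℕ} (v w : Finset (Fin n) → ℝ) (x : Fin n → ℝ) : Prop :=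
  w ∅ = 0 ∧ (∀ S ∈ propSubsets n, w S ≤ coalSum x S) ∧
    w Finset.univ = v Finset.univ ∧ coalSum x Finset.univ = v Finset.univ

/-- `(w, x)` is an optimal solution of Problem (P2). -/
def OptP2 {n : ℕ} (γ v w : Finset (Fin n) → ℝ) (x : Fin n → ℝ) : Prop :=
  FeasP2 v w x ∧ ∀ (w' : Finset (Fin n) → ℝ) (x' : Fin n → ℝ),
    FeasP2 v w' x' → dist2 γ v w ≤ dist2 γ v w'

/-- `x` is an optimal solution of Problem (P4). -/
noncomputable def OptP4 {n : ℕ} (γ v : Finset (Fin n) → ℝ) (x : Fin n → ℝ) : Prop :=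
  coalSum x Finset.univ = v Finset.univ ∧
    ∀ x' : Fin n → ℝ, coalSum x' Finset.univ = v Finset.univ → gP4 γ v x ≤ gP4 γ v x'

/-!
For a fixed allocation `x`, Problem (P2) separates over the coalitions: the best admissible value
`w S ≤ x(S)` is the projection of `v S` onto `(-∞, x(S)]`, namely `min (x(S)) (v S)`. The squared
error at this value is exactly the `S`-term of the objective of (P4), so (P4) is what remains
of (P2) after minimizing over `w`.
-/

section Projection

variable {R : Type*} [Ring R] [LinearOrder R]

theorem sq_sub_min_eq (a c : R) : (c - min a c) ^ 2 = (c - a) ^ 2 * (if a ≤ c then 1 else 0) := by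
  split_ifs with h
  · rw [min_eq_left h, mul_one]
  · rw [min_eq_right (not_le.mp h).le, sub_self, zero_pow two_ne_zero, mul_zero]

theorem sq_sub_min_le_sq_sub [IsOrderedRing R] {a b : R} (hba : b ≤ a) (c : R) :
    (c - min a c) ^ 2 ≤ (c - b) ^ 2 := by
  rcases le_total a c with hac | hca
  · rw [min_eq_left hac]
    exact pow_le_pow_left₀ (sub_nonneg.mpr hac) (sub_le_sub_left hba c) 2
  · rw [min_eq_right hca, sub_self, zero_pow two_ne_zero]
    exact sq_nonneg (c - b)

end Projection

section Games

variable {n : ℕ} {γ v w : Finset (Fin n) → ℝ} {x : Fin n → ℝ}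

theorem dist2_congr_right {w' : Finset (Fin n) → ℝ} (h : ∀ S ∈ propSubsets n, w S = w' S) :
    dist2 γ v w = dist2 γ v w' :=
  Finset.sum_congr rfl fun S hS => by rw [h S hS]

theorem dist2_inf_le_dist2 {u : Finset (Fin n) → ℝ} (hγ : ∀ S ∈ propSubsets n, 0 ≤ γ S)
    (hwu : ∀ S ∈ propSubsets n, w S ≤ u S) : dist2 γ v (u ⊓ v) ≤ dist2 γ v w :=
  Finset.sum_le_sum fun S hS =>
    mul_le_mul_of_nonneg_left (sq_sub_min_le_sq_sub (hwu S hS) (v S)) (hγ S hS)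

theorem gP4_eq_dist2_inf (γ v : Finset (Fin n) → ℝ) (x : Fin n → ℝ) :
    gP4 γ v x = dist2 γ v (coalSum x ⊓ v) :=
  Finset.sum_congr rfl fun S _ => by rw [Pi.inf_apply, sq_sub_min_eq, mul_assoc]

theorem gP4_le_dist2 (hγ : ∀ S ∈ propSubsets n, 0 ≤ γ S)
    (hwx : ∀ S ∈ propSubsets n, w S ≤ coalSum x S) : gP4 γ v x ≤ dist2 γ v w :=
  (gP4_eq_dist2_inf γ v x).trans_le (dist2_inf_le_dist2 hγ hwx)

-- The game `v*` without its case distinction: the minimum already has the right values at `∅`, `N`.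
theorem feasP2_coalSum_inf (hv0 : v ∅ = 0) (hx : coalSum x univ = v univ) :
    FeasP2 v (coalSum x ⊓ v) x := by
  have hx0 : coalSum x ∅ = 0 := Finset.sum_empty
  refine ⟨?_, fun S _ => inf_le_left, ?_, hx⟩
  · rw [Pi.inf_apply, hx0, hv0, inf_idem]
  · rw [Pi.inf_apply, hx, inf_idem]

theorem OptP4.optP2_of_dist2_le (hγ : ∀ S ∈ propSubsets n, 0 ≤ γ S) (hx : OptP4 γ v x)
    (hwx : FeasP2 v w x) (hdist : dist2 γ v w ≤ gP4 γ v x) : OptP2 γ v w x := by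
  refine ⟨hwx, fun w' x' ⟨_, hle, _, hx'⟩ => ?_⟩
  calc
    dist2 γ v w ≤ gP4 γ v x := hdist
    _ ≤ gP4 γ v x' := hx.2 x' hx'
    _ ≤ dist2 γ v w' := gP4_le_dist2 hγ hle

theorem OptP2.optP4 (hv0 : v ∅ = 0) (hγ : ∀ S ∈ propSubsets n, 0 ≤ γ S)
    (hwx : OptP2 γ v w x) : OptP4 γ v x := by
  obtain ⟨⟨_, hle, _, hx⟩, hmin⟩ := hwx
  refine ⟨hx, fun x' hx' => ?_⟩
  calc
    gP4 γ v x ≤ dist2 γ v w := gP4_le_dist2 hγ hle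
    _ ≤ dist2 γ v (coalSum x' ⊓ v) := hmin _ x' (feasP2_coalSum_inf hv0 hx')
    _ = gP4 γ v x' := (gP4_eq_dist2_inf γ v x').symm

end Games

/-- Proposition (Proposition `prop:equiv`): equivalence of Problems (P2) and (P4).
(i) If `x*` is optimal for (P4) then `(v*, x*)` is optimal for (P2), where `v*` is the
game with `v*(S) = min{x*(S), v(S)}` for nonempty proper `S` and `v*(N) = v(N)`.
(ii) If `(v*, x*)` is optimal for (P2), then `x*` is optimal for (P4). -/
theorem P2_equiv_P4 (n : ℕ) (v γ : Finset (Fin n) → ℝ)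
    (hv0 : v ∅ = 0)
    (hγ : ∀ S ∈ propSubsets n, 0 < γ S) :
    (∀ xs : Fin n → ℝ, OptP4 γ v xs →
      ∀ vstar : Finset (Fin n) → ℝ,
        vstar ∅ = 0 → vstar Finset.univ = v Finset.univ →
        (∀ S ∈ propSubsets n, vstar S = min (coalSum xs S) (v S)) →
        OptP2 γ v vstar xs) ∧
    (∀ (vstar : Finset (Fin n) → ℝ) (xs : Fin n → ℝ),
      OptP2 γ v vstar xs → OptP4 γ v xs) := by
  have hγ_nonneg : ∀ S ∈ propSubsets n, 0 ≤ γ S := fun S hS => (hγ S hS).le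
  refine ⟨fun xs hxs vstar h_empty h_univ h_min => ?_, fun _ _ h => h.optP4 hv0 hγ_nonneg⟩
  have h_feas : FeasP2 v vstar xs :=
    ⟨h_empty, fun S hS => (h_min S hS).trans_le (min_le_left _ _), h_univ, hxs.1⟩
  have h_dist : dist2 γ v vstar = gP4 γ v xs :=
    (dist2_congr_right h_min).trans (gP4_eq_dist2_inf γ v xs).symm
  exact hxs.optP2_of_dist2_le hγ_nonneg h_feas h_dist.le
end

section
/- Let 𝒜* be a family of nonempty proper subsets of N = {1,…,n} and suppose x* ∈ ℝⁿ satisfies x*(N) = v(N) and minimizes ∑_{S∈𝒜*} γ_S (v(S) − x(S))² over all x ∈ ℝⁿ with x(N) = v(N); suppose moreover that x*(S) ≤ v(S) for every S ∈ 𝒜* and x*(S) > v(S) for every nonempty proper subset S ∉ 𝒜*. Then x* minimizes g(x) = ∑_{∅≠S⊊N} γ_S (max{v(S) − x(S), 0})² over all x ∈ ℝⁿ with x(N) = v(N). -/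
open Finset

/-- The objective of Problem (P4), written with the max:
`g(x) = ∑_{∅≠S⊊N} γ_S (max{v(S) − x(S), 0})²`. -/
def gMax {n : ℕ} (γ v : Finset (Fin n) → ℝ) (x : Fin n → ℝ) : ℝ :=
  ∑ S ∈ propSubsets n, γ S * (max (v S - coalSum x S) 0) ^ 2

/-!
Along a segment from `x*` into the feasible set the active objective `∑_{S∈𝒜*} γ_S (v(S) − x(S))²`
is quadratic in the segment parameter, so minimality of `x*` makes its directional derivatives at
`x*` nonnegative. Since `x*(S) ≤ v(S)` on `𝒜*`, the convex function `r ↦ (max{r, 0})²` has the same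
tangent as `r ↦ r²` at each active residual. Hence the tangent inequalities, summed over `𝒜*`, bound
the active part of `g` from below by its value at `x*`, where the inactive part of `g` vanishes;
elsewhere the inactive part is nonnegative.
-/

section CommRing

variable {R E ι : Type*} [CommRing R]

lemma sum_mul_sq_affineMap_add_smul_sub [AddCommGroup E] [Module R E] (s : Finset ι) (w : ι → R)
    (r : ι → E →ᵃ[R] R) (x y : E) (t : R) :
    ∑ i ∈ s, w i * r i (x + t • (y - x)) ^ 2 =
      ∑ i ∈ s, w i * r i x ^ 2 + t * (2 * ∑ i ∈ s, w i * (r i x * (r i y - r i x)) +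
        t * ∑ i ∈ s, w i * (r i y - r i x) ^ 2) := by
  have h_segment (i : ι) : r i (x + t • (y - x)) = r i x + t * (r i y - r i x) := by
    simpa [AffineMap.lineMap_apply, add_comm] using (r i).apply_lineMap x y t
  simp only [h_segment, mul_sum, ← sum_add_distrib]
  exact sum_congr rfl fun i _ ↦ by ring

variable [LinearOrder R]

lemma sum_mul_max_zero_sq_eq_sum_mul_sq {s t : Finset ι} (hst : s ⊆ t) (w : ι → R) {a : ι → R}
    (hs : ∀ i ∈ s, 0 ≤ a i) (ht : ∀ i ∈ t, i ∉ s → a i ≤ 0) :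
    ∑ i ∈ t, w i * max (a i) 0 ^ 2 = ∑ i ∈ s, w i * a i ^ 2 := by
  rw [← sum_subset hst fun i hit his ↦ by simp [max_eq_right (ht i hit his)]]
  exact sum_congr rfl fun i hi ↦ by rw [max_eq_left (hs i hi)]

variable [IsStrictOrderedRing R]

lemma sq_add_two_mul_mul_sub_le_max_zero_sq {a : R} (ha : 0 ≤ a) (b : R) :
    a ^ 2 + 2 * (a * (b - a)) ≤ max b 0 ^ 2 :=
  calc
    a ^ 2 + 2 * (a * (b - a)) ≤ a ^ 2 + 2 * (a * (max b 0 - a)) := by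
      gcongr
      exact le_max_left b 0
    _ = max b 0 ^ 2 - (max b 0 - a) ^ 2 := by ring
    _ ≤ max b 0 ^ 2 := sub_le_self _ (sq_nonneg _)

lemma sum_mul_sq_le_sum_mul_max_zero_sq {s : Finset ι} {w a b : ι → R}
    (hw : ∀ i ∈ s, 0 ≤ w i) (ha : ∀ i ∈ s, 0 ≤ a i)
    (hab : 0 ≤ ∑ i ∈ s, w i * (a i * (b i - a i))) :
    ∑ i ∈ s, w i * a i ^ 2 ≤ ∑ i ∈ s, w i * max (b i) 0 ^ 2 :=
  calc
    ∑ i ∈ s, w i * a i ^ 2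
      ≤ ∑ i ∈ s, w i * a i ^ 2 + 2 * ∑ i ∈ s, w i * (a i * (b i - a i)) :=
        le_add_of_nonneg_right (by positivity)
    _ = ∑ i ∈ s, w i * (a i ^ 2 + 2 * (a i * (b i - a i))) := by
        rw [mul_sum, ← sum_add_distrib]
        exact sum_congr rfl fun i _ ↦ by ring
    _ ≤ ∑ i ∈ s, w i * max (b i) 0 ^ 2 := sum_le_sum fun i hi ↦
        mul_le_mul_of_nonneg_left (sq_add_two_mul_mul_sub_le_max_zero_sq (ha i hi) _) (hw i hi)

end CommRing

section Field

variable {𝕜 E ι : Type*} [Field 𝕜] [LinearOrder 𝕜] [IsStrictOrderedRing 𝕜]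

lemma nonneg_of_forall_nonneg_add_mul {p q : 𝕜}
    (h : ∀ t : 𝕜, 0 < t → t ≤ 1 → 0 ≤ p + t * q) : 0 ≤ p := by
  by_contra! hp
  have h_one : 0 ≤ p + 1 * q := h 1 one_pos le_rfl
  have hq : 0 < q := by linarith
  -- The witness `-p / (2 * q)` is half the zero of `t ↦ p + t * q`.
  have ht_pos : 0 < -p / (2 * q) := div_pos (neg_pos.2 hp) (by positivity)
  have ht_le : -p / (2 * q) ≤ 1 := (div_le_one (by positivity)).2 (by linarith)
  have h_half : p + -p / (2 * q) * q = p / 2 := by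
    field_simp
    ring
  linarith [h _ ht_pos ht_le]

variable [AddCommGroup E] [Module 𝕜 E] {C : Set E} {x y : E}

lemma sum_mul_mul_sub_nonneg_of_isMinOn {s : Finset ι} {w : ι → 𝕜} {r : ι → E →ᵃ[𝕜] 𝕜}
    (hC : StarConvex 𝕜 x C) (hmin : IsMinOn (fun z ↦ ∑ i ∈ s, w i * r i z ^ 2) C x)
    (hy : y ∈ C) : 0 ≤ ∑ i ∈ s, w i * (r i x * (r i y - r i x)) := by
  suffices h : 0 ≤ 2 * ∑ i ∈ s, w i * (r i x * (r i y - r i x)) from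
    nonneg_of_mul_nonneg_right h two_pos
  refine nonneg_of_forall_nonneg_add_mul (q := ∑ i ∈ s, w i * (r i y - r i x) ^ 2)
    fun t ht_pos ht_le ↦ ?_
  have h_le := isMinOn_iff.1 hmin _ (hC.add_smul_sub_mem hy ht_pos.le ht_le)
  rw [sum_mul_sq_affineMap_add_smul_sub, le_add_iff_nonneg_right] at h_le
  exact nonneg_of_mul_nonneg_right h_le ht_pos

theorem optimal_on_active_family_general {A I : Finset ι} {w : ι → 𝕜} {r : ι → E →ᵃ[𝕜] 𝕜}
    (hC : StarConvex 𝕜 x C) (hAI : A ⊆ I) (hw : ∀ i ∈ I, 0 ≤ w i)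
    (hmin : IsMinOn (fun y ↦ ∑ i ∈ A, w i * r i y ^ 2) C x)
    (hin : ∀ i ∈ A, 0 ≤ r i x) (hout : ∀ i ∈ I, i ∉ A → r i x ≤ 0) :
    IsMinOn (fun y ↦ ∑ i ∈ I, w i * max (r i y) 0 ^ 2) C x :=
  isMinOn_iff.2 fun y hy ↦ calc
    ∑ i ∈ I, w i * max (r i x) 0 ^ 2
      = ∑ i ∈ A, w i * r i x ^ 2 := sum_mul_max_zero_sq_eq_sum_mul_sq hAI w hin hout
    _ ≤ ∑ i ∈ A, w i * max (r i y) 0 ^ 2 :=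
        sum_mul_sq_le_sum_mul_max_zero_sq (fun i hi ↦ hw i (hAI hi)) hin
          (sum_mul_mul_sub_nonneg_of_isMinOn hC hmin hy)
    _ ≤ ∑ i ∈ I, w i * max (r i y) 0 ^ 2 :=
        sum_le_sum_of_subset_of_nonneg hAI fun i hi _ ↦ mul_nonneg (hw i hi) (sq_nonneg _)

end Field

section Games

variable {n : ℕ} (v : Finset (Fin n) → ℝ)

/-- The excess `v(S) − x(S)` of a coalition `S`, as an affine function of the allocation `x`. -/
def excess (S : Finset (Fin n)) : (Fin n → ℝ) →ᵃ[ℝ] ℝ where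
  toFun x := v S - coalSum x S
  linear := -∑ i ∈ S, LinearMap.proj i
  map_vadd' x d := by
    simp only [coalSum, vadd_eq_add, Pi.add_apply, sum_add_distrib, LinearMap.neg_apply,
      LinearMap.sum_apply, LinearMap.proj_apply]
    ring

/-- The preimputations of the game `v`: the allocations distributing exactly `v(N)`. These are the
feasible points of the minimization problems. -/
def preimputations : Set (Fin n → ℝ) := {x | coalSum x univ = v univ}

lemma preimputations_eq_preimage_excess : preimputations v = excess v univ ⁻¹' {0} :=
  Set.ext fun _ ↦ eq_comm.trans sub_eq_zero.symm

lemma convex_preimputations : Convex ℝ (preimputations v) := by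
  rw [preimputations_eq_preimage_excess]
  exact (convex_singleton 0).affine_preimage (excess v univ)

end Games

/-- Theorem (Theorem `convergence`): if `x*` minimizes `∑_{S∈𝒜*} γ_S (v(S) − x(S))²`
subject to `x(N) = v(N)`, with `x*(S) ≤ v(S)` for every `S ∈ 𝒜*` and `x*(S) > v(S)`
for every nonempty proper subset `S ∉ 𝒜*`, then `x*` minimizes
`g(x) = ∑_{∅≠S⊊N} γ_S (max{v(S) − x(S), 0})²` subject to `x(N) = v(N)`. -/
theorem optimal_on_active_family (n : ℕ) (v γ : Finset (Fin n) → ℝ)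
    (hv0 : v ∅ = 0)
    (hγ : ∀ S ∈ propSubsets n, 0 < γ S)
    (A : Finset (Finset (Fin n))) (hA : A ⊆ propSubsets n)
    (xs : Fin n → ℝ)
    (hxsN : coalSum xs Finset.univ = v Finset.univ)
    (hmin : ∀ x : Fin n → ℝ, coalSum x Finset.univ = v Finset.univ →
      ∑ S ∈ A, γ S * (v S - coalSum xs S) ^ 2 ≤ ∑ S ∈ A, γ S * (v S - coalSum x S) ^ 2)
    (hin : ∀ S ∈ A, coalSum xs S ≤ v S)
    (hout : ∀ S ∈ propSubsets n, S ∉ A → v S < coalSum xs S) :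
    ∀ x : Fin n → ℝ, coalSum x Finset.univ = v Finset.univ →
      gMax γ v xs ≤ gMax γ v x := by
  exact isMinOn_iff.1 <| optimal_on_active_family_general (r := excess v)
    ((convex_preimputations v).starConvex hxsN) hA (fun S hS ↦ (hγ S hS).le)
    (isMinOn_iff.2 hmin) (fun S hS ↦ sub_nonneg.2 (hin S hS))
    fun S hS hSA ↦ sub_nonpos.2 (hout S hS hSA).le
end

section
/- Let n ≥ 2 and let 𝓑 be a family of exactly n distinct nonempty subsets of N = {1,…,n}, with incidence matrix M_𝓑 ∈ {0,1}^{n×n} (rows indexed by the players of N, columns indexed by the members of 𝓑 in some fixed order, with entry 1 exactly when the player belongs to the set). Then 𝓑 is a minimal balanced collection if and only if M_𝓑 is invertible over ℝ and the unique solution λ of M_𝓑 λ = 𝟙 (where 𝟙 is the all-ones vector) is componentwise strictly positive. -/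
open Finset

/-- `lam` is a system of balancing weights for the collection `B`:
all weights are positive and `∑_{S∈B, S∋i} λ_S = 1` for every player `i`. -/
def IsBalancingWeights {n : ℕ} (B : Finset (Finset (Fin n)))
    (lam : Finset (Fin n) → ℝ) : Prop :=
  (∀ S ∈ B, 0 < lam S) ∧ ∀ i : Fin n, ∑ S ∈ B.filter (fun S => i ∈ S), lam S = 1

/-- `B` is a balanced collection: a family of nonempty subsets of `N` admitting a
system of balancing weights. -/
def IsBalancedCollection {n : ℕ} (B : Finset (Finset (Fin n))) : Prop :=
  (∀ S ∈ B, S ≠ ∅) ∧ ∃ lam, IsBalancingWeights B lam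

/-- `B` is a minimal balanced collection: balanced and no proper subfamily is balanced. -/
def IsMinimalBalancedCollection {n : ℕ} (B : Finset (Finset (Fin n))) : Prop :=
  IsBalancedCollection B ∧ ∀ B' ⊂ B, ¬ IsBalancedCollection B'

open Matrix

/-!
A balanced subfamily of `B` is the support of a nonnegative solution of `M x = 1`, so `B` is minimal
balanced iff `M x = 1` has a positive solution but no nonnegative solution with a zero entry.
If `M v = 0` with `v ≠ 0`, moving from a positive solution along the line spanned by `v` until some
entry first vanishes gives such a solution; hence minimality forces `M` to be injective.
Conversely, if `M` is injective then the positive solution is the only one.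
-/

section LinearSystem

variable {ι K R V : Type*}

theorem exists_nonneg_sub_smul_apply_eq_zero [Finite ι] [Field K] [LinearOrder K]
    [IsStrictOrderedRing K] {x v : ι → K} (hx : ∀ j, 0 < x j) (hv : v ≠ 0) :
    ∃ t : K, (∀ j, 0 ≤ (x - t • v) j) ∧ ∃ j, (x - t • v) j = 0 := by
  obtain ⟨k, hk⟩ := Function.ne_iff.1 hv
  have : Nonempty ι := ⟨k⟩
  -- Moving so as to shrink entry `m`, where `|v j| / x j` is largest, makes it vanish first.
  obtain ⟨m, hm⟩ := Finite.exists_max fun j => |v j| / x j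
  have hvm : 0 < |v m| := by
    have hratio : 0 < |v m| / x m := (div_pos (abs_pos.2 hk) (hx k)).trans_le (hm k)
    exact (div_pos_iff_of_pos_right (hx m)).1 hratio
  refine ⟨x m / v m, fun j => sub_nonneg.2 ?_, m, ?_⟩
  · calc x m / v m * v j ≤ |x m / v m * v j| := le_abs_self _
      _ = |v j| * x m / |v m| := by
        rw [abs_mul, abs_div, abs_of_pos (hx m), div_mul_eq_mul_div, mul_comm]
      _ ≤ x j := by
        rw [div_le_iff₀ hvm, mul_comm (x j)]
        exact (div_le_div_iff₀ (hx j) (hx m)).1 (hm j)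
  · simp [div_mul_cancel₀ _ (abs_pos.1 hvm)]

theorem injective_of_forall_nonneg_solution_pos [Finite ι] [Field K] [LinearOrder K]
    [IsStrictOrderedRing K] [AddCommGroup V] [Module K V] (f : (ι → K) →ₗ[K] V) {x : ι → K}
    (hx : ∀ j, 0 < x j) (hpos : ∀ y, (∀ j, 0 ≤ y j) → f y = f x → ∀ j, 0 < y j) :
    Function.Injective f := by
  refine (injective_iff_map_eq_zero f).2 fun v hfv => ?_
  by_contra hv
  obtain ⟨t, hnonneg, j, hj⟩ := exists_nonneg_sub_smul_apply_eq_zero hx hv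
  have hf : f (x - t • v) = f x := by rw [map_sub, map_smul, hfv, smul_zero, sub_zero]
  exact (hpos _ hnonneg hf j).ne' hj

theorem mulVec_eq_iff_eq_inv_mulVec [Fintype ι] [DecidableEq ι] [CommRing R] {A : Matrix ι ι R}
    (hA : IsUnit A) {x b : ι → R} : A *ᵥ x = b ↔ x = A⁻¹ *ᵥ b := by
  have hdet : IsUnit A.det := (isUnit_iff_isUnit_det A).1 hA
  constructor
  · rintro rfl
    rw [mulVec_mulVec, nonsing_inv_mul _ hdet, one_mulVec]
  · rintro rfl
    rw [mulVec_mulVec, mul_nonsing_inv _ hdet, one_mulVec]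

end LinearSystem

section IncidenceMatrix

variable {α ι : Type*} [DecidableEq α] (R : Type*)

/-- The incidence matrix of an indexed family `c` of finite sets: rows are indexed by points,
columns by members of the family. -/
def incidenceMatrix [Zero R] [One R] (c : ι → Finset α) : Matrix α ι R :=
  of fun i j => if i ∈ c j then 1 else 0

variable {R} [Fintype ι] [NonAssocSemiring R] {c : ι → Finset α}

theorem incidenceMatrix_mulVec_apply (x : ι → R) (i : α) :
    (incidenceMatrix R c *ᵥ x) i = ∑ j with i ∈ c j, x j := by
  simp [incidenceMatrix, mulVec, dotProduct, sum_filter]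

theorem incidenceMatrix_mulVec_apply_eq_sum_image (hc : Function.Injective c) {s : Finset ι}
    {x : ι → R} {lam : Finset α → R} (hin : ∀ j ∈ s, x j = lam (c j)) (hout : ∀ j ∉ s, x j = 0)
    (i : α) : (incidenceMatrix R c *ᵥ x) i = ∑ S ∈ s.image c with i ∈ S, lam S := by
  rw [incidenceMatrix_mulVec_apply, sum_filter, sum_filter, sum_image hc.injOn]
  calc ∑ j, (if i ∈ c j then x j else 0) = ∑ j ∈ s, if i ∈ c j then x j else 0 :=
        (sum_subset (subset_univ s) fun j _ hj => by rw [hout j hj, ite_self]).symm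
    _ = ∑ j ∈ s, if i ∈ c j then lam (c j) else 0 :=
        sum_congr rfl fun j hj => by rw [hin j hj]

theorem ne_empty_of_injective_incidenceMatrix_mulVec [Nontrivial R]
    (hinj : Function.Injective (incidenceMatrix R c).mulVec) (j : ι) : c j ≠ ∅ := by
  classical
  intro hj
  have hcol : incidenceMatrix R c *ᵥ Pi.single j 1 = incidenceMatrix R c *ᵥ 0 := by
    ext i
    simp [incidenceMatrix, hj]
  simpa using congrFun (hinj hcol) j

end IncidenceMatrix

section BalancedCollection

variable {n : ℕ} {ι : Type*} [Fintype ι] {c : ι → Finset (Fin n)}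

theorem isBalancedCollection_image_iff (hc : Function.Injective c) (s : Finset ι) :
    IsBalancedCollection (s.image c) ↔ (∀ j ∈ s, c j ≠ ∅) ∧
      ∃ x : ι → ℝ, (∀ j ∈ s, 0 < x j) ∧ (∀ j ∉ s, x j = 0) ∧ incidenceMatrix ℝ c *ᵥ x = 1 := by
  classical
  simp only [IsBalancedCollection, IsBalancingWeights, forall_mem_image]
  refine and_congr_right fun _ => ⟨?_, ?_⟩
  · rintro ⟨lam, hpos, hlam⟩
    have hin : ∀ j ∈ s, (if j ∈ s then lam (c j) else 0) = lam (c j) :=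
      fun _ hj => if_pos hj
    have hout : ∀ j ∉ s, (if j ∈ s then lam (c j) else 0) = 0 :=
      fun _ hj => if_neg hj
    refine ⟨_, fun j hj => (hin j hj).symm ▸ hpos hj, hout, funext fun i => ?_⟩
    rw [incidenceMatrix_mulVec_apply_eq_sum_image hc hin hout, hlam, Pi.one_apply]
  · rintro ⟨x, hpos, hout, hx⟩
    have hin : ∀ j, Function.extend c x 0 (c j) = x j := hc.extend_apply x 0
    refine ⟨Function.extend c x 0, fun j hj => (hin j).symm ▸ hpos j hj, fun i => ?_⟩
    rw [← incidenceMatrix_mulVec_apply_eq_sum_image hc (fun j _ => (hin j).symm) hout, hx,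
      Pi.one_apply]

theorem isMinimalBalancedCollection_image_univ_iff (hc : Function.Injective c) :
    IsMinimalBalancedCollection (univ.image c) ↔
      Function.Injective (incidenceMatrix ℝ c).mulVec ∧
        ∃ x : ι → ℝ, (∀ j, 0 < x j) ∧ incidenceMatrix ℝ c *ᵥ x = 1 := by
  constructor
  · rintro ⟨hbal, hmin⟩
    obtain ⟨hne, x, hpos, -, hx⟩ := (isBalancedCollection_image_iff hc univ).1 hbal
    simp only [mem_univ, true_imp_iff] at hne hpos
    refine ⟨injective_of_forall_nonneg_solution_pos (incidenceMatrix ℝ c).mulVecLin hpos ?_,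
      x, hpos, hx⟩
    intro y hy hyx k
    by_contra hk
    let s : Finset ι := {j | 0 < y j}
    have hs : s ⊂ univ :=
      ssubset_univ_iff.2 fun h => hk (mem_filter.1 (h.symm.subset (mem_univ k))).2
    refine hmin (s.image c) ((image_ssubset_image hc).2 hs)
      ((isBalancedCollection_image_iff hc s).2
        ⟨fun j _ => hne j, y, fun j hj => (mem_filter.1 hj).2, fun j hj => ?_, hyx.trans hx⟩)
    exact (hy j).antisymm' (not_lt.1 fun hj' => hj (mem_filter.2 ⟨mem_univ j, hj'⟩))
  · rintro ⟨hinj, x, hpos, hx⟩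
    have hne := ne_empty_of_injective_incidenceMatrix_mulVec hinj
    refine ⟨(isBalancedCollection_image_iff hc univ).2
      ⟨fun j _ => hne j, x, fun j _ => hpos j, by simp, hx⟩, fun B' hB' hbal => ?_⟩
    obtain ⟨s, -, rfl⟩ := subset_image_iff.1 hB'.subset
    obtain ⟨j, -, hj⟩ := exists_of_ssubset ((image_ssubset_image hc).1 hB')
    obtain ⟨-, y, -, hout, hy⟩ := (isBalancedCollection_image_iff hc s).1 hbal
    have hyx : y = x := hinj (hy.trans hx.symm)
    exact (hpos j).ne' (hyx ▸ hout j hj)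

end BalancedCollection

/-- Characterization of minimal balanced collections of cardinality `n`:
a family `𝓑` of exactly `n` distinct nonempty subsets of `N = {1,…,n}`, enumerated
by an injective map `c : Fin n → Finset (Fin n)` with range `𝓑`, is a minimal
balanced collection iff its incidence matrix `M` (with `M i j = 1` iff `i ∈ c j`)
is invertible over `ℝ` and the unique solution `λ = M⁻¹ 𝟙` of `M λ = 𝟙` is
componentwise strictly positive. -/
theorem mbc_iff_incidence_invertible_posSolution
    (n : ℕ) (hn : 2 ≤ n) (B : Finset (Finset (Fin n)))
    (hcard : B.card = n) (hne : ∀ S ∈ B, S ≠ ∅)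
    (c : Fin n → Finset (Fin n)) (hcinj : Function.Injective c)
    (hcB : ∀ j, c j ∈ B)
    (M : Matrix (Fin n) (Fin n) ℝ)
    (hM : ∀ i j, M i j = if i ∈ c j then 1 else 0) :
    IsMinimalBalancedCollection B ↔
      (IsUnit M ∧ ∀ j, 0 < (M⁻¹ *ᵥ (1 : Fin n → ℝ)) j) := by
  have hB : univ.image c = B :=
    eq_of_subset_of_card_le (image_subset_iff.2 fun j _ => hcB j)
      (by rw [card_image_of_injective _ hcinj, hcard, card_univ, Fintype.card_fin])
  have hMc : M = incidenceMatrix ℝ c := Matrix.ext hM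
  rw [← hB, isMinimalBalancedCollection_image_univ_iff hcinj, ← hMc, mulVec_injective_iff_isUnit]
  refine and_congr_right fun hU => ?_
  simp only [mulVec_eq_iff_eq_inv_mulVec hU, exists_eq_right]
end

section
/- For n ≥ 1 and 1 ≤ i ≤ n, let q_n(i) be the proportion, among all invertible n×n sign matrices C, of those for which the i-th coordinate of C⁻¹𝟙 equals 0. Then lim_{n→∞} max_{1≤i≤n} q_n(i) = 0. -/
open Matrix

/-- A sign matrix: an `n×n` real matrix with all entries in `{−1,1}`. -/
def IsSignMatrix {n : ℕ} (C : Matrix (Fin n) (Fin n) ℝ) : Prop :=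
  ∀ i j, C i j = 1 ∨ C i j = -1

/-- `q_n(i)`: the proportion, among all invertible `n×n` sign matrices `C`, of
those for which the `i`-th coordinate of `C⁻¹𝟙` equals `0`. -/
noncomputable def qn (n : ℕ) (i : Fin n) : ℝ :=
  (Nat.card {C : Matrix (Fin n) (Fin n) ℝ //
      IsSignMatrix C ∧ IsUnit C ∧ (C⁻¹ *ᵥ (1 : Fin n → ℝ)) i = 0} : ℝ) /
  (Nat.card {C : Matrix (Fin n) (Fin n) ℝ // IsSignMatrix C ∧ IsUnit C} : ℝ)

/-! By Cramer's rule the `i`-th coordinate of `C⁻¹𝟙` vanishes exactly when replacing column `i` of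
`C` by `𝟙` makes it singular. Changing row signs brings every sign matrix to the form of the new
matrix, so everything reduces to the theorem of Komlós that a uniform `n × n` sign matrix is
singular with probability `o(1)`.

Let `t` be a set of `n - k` rows.
* An `r`-dimensional subspace contains at most `2 ^ r` sign vectors (Odlyzko), so the rows in `t`
  are dependent with probability at most `2 ^ (-k)`.
* The same bound for the columns of the block of rows in `t`, and a union bound over the sets of
  `d` columns, show that every nonzero vector orthogonal to the rows in `t` has more than `d`
  nonzero entries, up to probability `O(n ^ d 2 ^ (-n))`.
* If so, a further row lies in the span of the previous ones with probability at most
  `1 / √(d + 1)`, by the Littlewood–Offord inequality applied to a normal vector of that span.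

Hence for fixed `k` and `d` singularity has probability at most
`2 ^ (-k) + k / √(d + 1) + o(1)`.
-/

section Instances

variable {ι κ α : Type*}

instance [Finite ι] [Finite κ] [Finite α] : Finite (Matrix ι κ α) :=
  inferInstanceAs (Finite (ι → κ → α))

instance [Nonempty α] : Nonempty (Matrix ι κ α) :=
  inferInstanceAs (Nonempty (ι → κ → α))

instance : Nontrivial ℤˣ :=
  ⟨1, -1, by decide⟩

end Instances

section Proportion

variable {Ω Θ : Type*}

/-- The proportion of elements of a finite type that lie in `E`, i.e. the probability of `E` under
the uniform law. -/
noncomputable def proportion (E : Set Ω) : ℝ :=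
  E.ncard / Nat.card Ω

lemma proportion_nonneg (E : Set Ω) : 0 ≤ proportion E := by
  unfold proportion
  positivity

@[simp]
lemma proportion_empty : proportion (∅ : Set Ω) = 0 := by
  simp [proportion]

lemma proportion_union_le (E F : Set Ω) : proportion (E ∪ F) ≤ proportion E + proportion F := by
  unfold proportion
  rw [← add_div]
  gcongr
  exact_mod_cast Set.ncard_union_le E F

lemma proportion_iUnion_le {ι : Type*} [Fintype ι] (E : ι → Set Ω) :
    proportion (⋃ i, E i) ≤ ∑ i, proportion (E i) := by
  unfold proportion
  rw [← Finset.sum_div]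
  gcongr
  exact_mod_cast Set.ncard_iUnion_le_of_fintype E

lemma proportion_preimage_equiv (e : Ω ≃ Θ) (E : Set Θ) :
    proportion (e ⁻¹' E) = proportion E := by
  unfold proportion
  rw [Set.ncard_preimage_of_injective_subset_range e.injective (by simp), Nat.card_congr e]

lemma proportion_mono [Finite Ω] {E F : Set Ω} (h : E ⊆ F) : proportion E ≤ proportion F := by
  unfold proportion
  gcongr
  exact Set.toFinite F

lemma proportion_compl [Finite Ω] [Nonempty Ω] (E : Set Ω) :
    proportion Eᶜ = 1 - proportion E := by
  unfold proportion
  rw [eq_sub_iff_add_eq', ← add_div, div_eq_one_iff_eq (Nat.cast_ne_zero.2 Nat.card_pos.ne')]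
  exact_mod_cast Set.ncard_add_ncard_compl E

-- Resampling part of a uniform point `y` by an independent uniform `z` is encoded by a
-- permutation of the pairs `(y, z)`, whose first component is then again uniform.
lemma proportion_le_of_perm_prod [Finite Ω] [Finite Θ] [Nonempty Ω] [Nonempty Θ]
    (e : Equiv.Perm (Ω × Θ)) {E : Set Ω} {c : ℝ}
    (h : ∀ y, proportion {z | (e (y, z)).1 ∈ E} ≤ c) : proportion E ≤ c := by
  have := Fintype.ofFinite Ω
  have hcount : E.ncard * Nat.card Θ = ∑ y, {z | (e (y, z)).1 ∈ E}.ncard := by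
    calc E.ncard * Nat.card Θ
        = (E ×ˢ (Set.univ : Set Θ)).ncard := by rw [Set.ncard_prod, Set.ncard_univ]
      _ = (e ⁻¹' (E ×ˢ Set.univ)).ncard :=
          (Set.ncard_preimage_of_injective_subset_range e.injective (by simp)).symm
      _ = Nat.card {p : Ω × Θ // (e (p.1, p.2)).1 ∈ E} := by
          rw [← Nat.card_coe_set_eq]
          exact Nat.card_congr (Equiv.subtypeEquivRight (by simp))
      _ = ∑ y, {z | (e (y, z)).1 ∈ E}.ncard := by
          rw [Nat.card_congr (Equiv.subtypeProdEquivSigmaSubtype fun y z => (e (y, z)).1 ∈ E),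
            Nat.card_sigma]
          rfl
  have hΩ : (0 : ℝ) < Nat.card Ω := mod_cast Nat.card_pos
  have hΘ : (0 : ℝ) < Nat.card Θ := mod_cast Nat.card_pos
  have hfiber : ∀ y, ({z | (e (y, z)).1 ∈ E}.ncard : ℝ) ≤ c * Nat.card Θ :=
    fun y => (div_le_iff₀ hΘ).1 (h y)
  rw [proportion, div_le_iff₀ hΩ]
  refine le_of_mul_le_mul_right ?_ hΘ
  calc (E.ncard : ℝ) * Nat.card Θ
      = ∑ y, ({z | (e (y, z)).1 ∈ E}.ncard : ℝ) := mod_cast hcount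
    _ ≤ ∑ _y : Ω, c * Nat.card Θ := Finset.sum_le_sum fun y _ => hfiber y
    _ = c * Nat.card Ω * Nat.card Θ := by
        rw [Finset.sum_const, Finset.card_univ, ← Nat.card_eq_fintype_card, nsmul_eq_mul]
        ring

variable {ι ι' κ β : Type*} [Finite ι] [Finite κ] [Finite β] [Nonempty β]

lemma proportion_le_of_forall_extend {f : ι' → ι} (hf : Function.Injective f) {E : Set (ι → β)}
    {c : ℝ} (h : ∀ y, proportion {z : ι' → β | Function.extend f z y ∈ E} ≤ c) :
    proportion E ≤ c := by
  have := Finite.of_injective f hf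
  let swap : (ι → β) × (ι' → β) → (ι → β) × (ι' → β) :=
    fun p => (Function.extend f p.2 p.1, p.1 ∘ f)
  have hswap : Function.Involutive swap := by
    rintro ⟨y, z⟩
    refine Prod.ext (funext fun i => ?_) (Function.extend_comp hf z y)
    by_cases hi : ∃ j, f j = i
    · obtain ⟨j, rfl⟩ := hi
      exact hf.extend_apply _ _ _
    · simp only [swap, Function.extend_apply' _ _ _ hi]
  exact proportion_le_of_perm_prod hswap.toPerm h

lemma proportion_comp_mem_le {f : ι' → ι} (hf : Function.Injective f) (E : Set (ι' → β)) :
    proportion {x : ι → β | x ∘ f ∈ E} ≤ proportion E :=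
  proportion_le_of_forall_extend hf fun y => by
    simp only [Set.mem_ofPred_eq, Function.extend_comp hf, Set.ofPred_mem_eq, le_refl]

lemma proportion_le_of_forall_updateRow [DecidableEq ι] (i : ι) {E : Set (Matrix ι κ β)} {c : ℝ}
    (h : ∀ M : Matrix ι κ β, proportion {x | M.updateRow i x ∈ E} ≤ c) : proportion E ≤ c := by
  let swap : Matrix ι κ β × (κ → β) → Matrix ι κ β × (κ → β) :=
    fun p => (p.1.updateRow i p.2, p.1 i)
  have hswap : Function.Involutive swap := fun p => by
    simp only [swap, Matrix.updateRow_idem, Matrix.updateRow_self, Matrix.updateRow_eq_self]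
  exact proportion_le_of_perm_prod hswap.toPerm h

end Proportion

section SpanProportion

open Module

variable {K ι κ α : Type*} [Field K]

lemma exists_ncard_le_finrank_injOn_domRestrict [Finite ι] (W : Submodule K (ι → K)) :
    ∃ s : Set ι, s.ncard ≤ finrank K W ∧ Set.InjOn s.domRestrict (W : Set (ι → K)) := by
  let coord : ι → Dual K W := fun i => LinearMap.proj i ∘ₗ W.subtype
  obtain ⟨s, -, -, hspan, hs⟩ :=
    exists_linearIndepOn_extension (linearIndepOn_empty K coord) (Set.empty_subset Set.univ)
  have := Fintype.ofFinite s
  refine ⟨s, ?_, fun x hx y hy hxy => funext fun i => ?_⟩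
  · rw [← Nat.card_coe_set_eq, Nat.card_eq_fintype_card, ← Subspace.dual_finrank_eq]
    exact LinearIndependent.fintype_card_le_finrank hs
  · have hagree : Set.EqOn (Dual.eval K W ⟨x, hx⟩) (Dual.eval K W ⟨y, hy⟩) (coord '' s) := by
      rintro _ ⟨j, hj, rfl⟩
      exact congrFun hxy ⟨j, hj⟩
    exact LinearMap.eqOn_span hagree (hspan (Set.mem_image_of_mem coord (Set.mem_univ i)))

lemma image_row_updateRow_of_notMem [DecidableEq ι] {i : ι} {s : Set ι} (hi : i ∉ s)
    (A : Matrix ι κ α) (x : κ → α) : (A.updateRow i x).row '' s = A.row '' s :=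
  Set.image_congr fun _ hk => updateRow_ne (ne_of_mem_of_not_mem hk hi)

lemma finrank_span_image_finset_le_card {V : Type*} [AddCommGroup V] [Module K V] (v : ι → V)
    (s : Finset ι) : finrank K (Submodule.span K (v '' s)) ≤ s.card := by
  classical
  rw [← Finset.coe_image]
  exact (finrank_span_finset_le_card _).trans Finset.card_image_le

variable [Fintype α] {g : α → K}

lemma proportion_comp_mem_submodule_le [Nonempty α] [Fintype ι] (hg : Function.Injective g)
    (W : Submodule K (ι → K)) :
    proportion {x : ι → α | g ∘ x ∈ W} ≤
      (Fintype.card α : ℝ) ^ finrank K W / (Fintype.card α : ℝ) ^ Fintype.card ι := by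
  obtain ⟨s, hcard, hinj⟩ := exists_ncard_le_finrank_injOn_domRestrict W
  have hle : {x : ι → α | g ∘ x ∈ W}.ncard ≤ Fintype.card α ^ s.ncard := by
    calc {x : ι → α | g ∘ x ∈ W}.ncard
        ≤ (Set.univ : Set (s → α)).ncard := by
          refine Set.ncard_le_ncard_of_injOn s.domRestrict (fun _ _ => Set.mem_univ _) ?_
          intro x hx y hy hxy
          exact hg.comp_left (hinj hx hy (congrArg (g ∘ ·) hxy))
      _ = Fintype.card α ^ s.ncard := by
          rw [Set.ncard_univ, Nat.card_fun, Nat.card_eq_fintype_card, Nat.card_coe_set_eq]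
  have hα : (1 : ℝ) ≤ Fintype.card α := mod_cast Fintype.card_pos
  rw [proportion, Nat.card_fun, Nat.card_eq_fintype_card, Nat.card_eq_fintype_card, Nat.cast_pow]
  gcongr
  calc ({x : ι → α | g ∘ x ∈ W}.ncard : ℝ) ≤ (Fintype.card α : ℝ) ^ s.ncard := mod_cast hle
    _ ≤ (Fintype.card α : ℝ) ^ finrank K W := pow_le_pow_right₀ hα hcard

variable [Fintype κ] [Finite ι] {s : Finset ι}

lemma proportion_row_mem_span_le [Nonempty α] (hg : Function.Injective g) {i : ι} (hi : i ∉ s) :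
    proportion {M : Matrix ι κ α | g ∘ M i ∈ Submodule.span K ((M.map g).row '' s)} ≤
      (Fintype.card α : ℝ) ^ s.card / (Fintype.card α : ℝ) ^ Fintype.card κ := by
  classical
  refine proportion_le_of_forall_updateRow i fun M => ?_
  have hα : (1 : ℝ) ≤ Fintype.card α := mod_cast Fintype.card_pos
  simp only [Set.mem_ofPred_eq, map_updateRow, updateRow_self,
    image_row_updateRow_of_notMem (Finset.mem_coe.not.2 hi)]
  refine (proportion_comp_mem_submodule_le hg _).trans ?_
  gcongr
  exact finrank_span_image_finset_le_card _ s

lemma proportion_not_linearIndepOn_row_le [Nontrivial α] (hg : Function.Injective g)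
    (s : Finset ι) :
    proportion {M : Matrix ι κ α | ¬ LinearIndepOn K (M.map g).row s} ≤
      (Fintype.card α : ℝ) ^ s.card / (Fintype.card α : ℝ) ^ Fintype.card κ := by
  classical
  have hα : (2 : ℝ) ≤ Fintype.card α := mod_cast Fintype.one_lt_card
  induction s using Finset.induction_on with
  | empty =>
    simp only [Finset.coe_empty, linearIndepOn_empty, not_true_eq_false, Set.ofPred_false,
      proportion_empty]
    positivity
  | insert i s hi ih =>
    have hsplit : {M : Matrix ι κ α | ¬ LinearIndepOn K (M.map g).row (insert i s : Finset ι)} ⊆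
        {M | ¬ LinearIndepOn K (M.map g).row s} ∪
          {M | g ∘ M i ∈ Submodule.span K ((M.map g).row '' s)} := fun M hM => by
      rw [Set.mem_ofPred_eq, Finset.coe_insert, linearIndepOn_insert (Finset.mem_coe.not.2 hi),
        not_and_not_right] at hM
      exact or_iff_not_imp_left.2 fun h => hM (not_not.1 h)
    calc proportion {M : Matrix ι κ α | ¬ LinearIndepOn K (M.map g).row (insert i s : Finset ι)}
        ≤ _ := proportion_mono hsplit
      _ ≤ _ := proportion_union_le _ _
      _ ≤ (Fintype.card α : ℝ) ^ s.card / (Fintype.card α : ℝ) ^ Fintype.card κ +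
            (Fintype.card α : ℝ) ^ s.card / (Fintype.card α : ℝ) ^ Fintype.card κ :=
          add_le_add ih (proportion_row_mem_span_le hg hi)
      _ = (Fintype.card α : ℝ) ^ s.card * 2 / (Fintype.card α : ℝ) ^ Fintype.card κ := by ring
      _ ≤ _ := by
          rw [Finset.card_insert_of_notMem hi, pow_succ]
          gcongr

end SpanProportion

section ColsIndep

variable {K ι κ α : Type*} [Field K] {d : ℕ}

/-- Any `d` columns of `A` are linearly independent, i.e. (for `d` at most the number of columns)
`A` has no nonzero kernel vector with at most `d` nonzero entries. -/
def ColsIndep (d : ℕ) (A : Matrix ι κ K) : Prop :=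
  ∀ S : Finset κ, S.card = d → LinearIndepOn K A.col S

lemma ColsIndep.lt_ncard_support [Fintype κ] {A : Matrix ι κ K} (hA : ColsIndep d A)
    (hd : d ≤ Fintype.card κ) {v : κ → K} (hv : v ≠ 0) (hAv : A *ᵥ v = 0) :
    d < (Function.support v).ncard := by
  classical
  by_contra! hle
  rw [Set.ncard_eq_toFinset_card'] at hle
  obtain ⟨S, hvS, hS⟩ := Finset.exists_superset_card_eq hle hd
  have hoff : ∀ i ∉ S, v i = 0 := fun i hi => by
    by_contra h
    exact hi (hvS (by simpa using h))
  have hrel : ∑ i ∈ S, v i • A.col i = 0 := by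
    rw [← hAv, mulVec_eq_sum, Finset.sum_subset S.subset_univ fun i _ hi => by simp [hoff i hi]]
    simp only [op_smul_eq_smul, col_def]
  have hon : ∀ i ∈ S, v i = 0 := linearIndepOn_finset_iff.1 (hA S hS) v hrel
  exact hv (funext fun i => if hi : i ∈ S then hon i hi else hoff i hi)

lemma proportion_not_colsIndep_le [Fintype ι] [Fintype κ] [Fintype α] [Nontrivial α] {g : α → K}
    (hg : Function.Injective g) (d : ℕ) :
    proportion {M : Matrix ι κ α | ¬ ColsIndep d (M.map g)} ≤
      (Fintype.card κ).choose d *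
        ((Fintype.card α : ℝ) ^ d / (Fintype.card α : ℝ) ^ Fintype.card ι) := by
  classical
  have hcols : ∀ S : {S : Finset κ // S.card = d},
      proportion {M : Matrix ι κ α | ¬ LinearIndepOn K (M.map g).col S.1} ≤
        (Fintype.card α : ℝ) ^ d / (Fintype.card α : ℝ) ^ Fintype.card ι := fun S => by
    have hrows := proportion_not_linearIndepOn_row_le (κ := ι) hg S.1
    rw [S.2] at hrows
    have htranspose : {M : Matrix ι κ α | ¬ LinearIndepOn K (M.map g).col S.1} =
        Equiv.piComm (fun _ _ => α) ⁻¹'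
          {N : Matrix κ ι α | ¬ LinearIndepOn K (N.map g).row S.1} := rfl
    rw [htranspose]
    exact (proportion_preimage_equiv _ _).trans_le hrows
  calc proportion {M : Matrix ι κ α | ¬ ColsIndep d (M.map g)}
      ≤ proportion (⋃ S : {S : Finset κ // S.card = d},
          {M : Matrix ι κ α | ¬ LinearIndepOn K (M.map g).col S.1}) :=
        proportion_mono fun M hM => by simpa [ColsIndep] using hM
    _ ≤ ∑ S : {S : Finset κ // S.card = d},
          proportion {M : Matrix ι κ α | ¬ LinearIndepOn K (M.map g).col S.1} :=
        proportion_iUnion_le _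
    _ ≤ ∑ _S : {S : Finset κ // S.card = d},
          (Fintype.card α : ℝ) ^ d / (Fintype.card α : ℝ) ^ Fintype.card ι :=
        Finset.sum_le_sum fun S _ => hcols S
    _ = _ := by
        rw [Finset.sum_const, Finset.card_univ, Fintype.card_finset_len, nsmul_eq_mul]

end ColsIndep

section LittlewoodOfford

lemma two_mul_add_one_mul_centralBinom_sq_le (m : ℕ) :
    (2 * m + 1) * m.centralBinom ^ 2 ≤ 16 ^ m := by
  induction m with
  | zero => simp
  | succ m ih =>
    refine Nat.le_of_mul_le_mul_left ?_ (by positivity : 0 < (m + 1) ^ 2)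
    calc (m + 1) ^ 2 * ((2 * (m + 1) + 1) * (m + 1).centralBinom ^ 2)
        = (2 * m + 3) * ((m + 1) * (m + 1).centralBinom) ^ 2 := by ring
      _ = 4 * (2 * m + 3) * (2 * m + 1) * ((2 * m + 1) * m.centralBinom ^ 2) := by
          rw [Nat.succ_mul_centralBinom_succ]
          ring
      _ ≤ 4 * (2 * m + 3) * (2 * m + 1) * 16 ^ m := by gcongr
      _ ≤ 16 * (m + 1) ^ 2 * 16 ^ m := Nat.mul_le_mul_right _ (by nlinarith)
      _ = (m + 1) ^ 2 * 16 ^ (m + 1) := by ring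

lemma succ_mul_choose_half_sq_le (n : ℕ) : (n + 1) * n.choose (n / 2) ^ 2 ≤ 4 ^ n := by
  rcases Nat.even_or_odd' n with ⟨m, rfl | rfl⟩
  · have h := two_mul_add_one_mul_centralBinom_sq_le m
    rw [Nat.centralBinom] at h
    rw [Nat.mul_div_cancel_left m two_pos, pow_mul]
    simpa using h
  · have hbinom : (m + 1).centralBinom = 2 * (2 * m + 1).choose m := by
      rw [Nat.centralBinom, show 2 * (m + 1) = 2 * m + 1 + 1 by ring, Nat.choose_succ_succ,
        Nat.choose_symm_half]
      ring
    have hpow : 4 ^ (2 * m + 1) * 4 = 16 ^ (m + 1) := by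
      rw [← pow_succ, show 2 * m + 1 + 1 = 2 * (m + 1) by ring, pow_mul]
      norm_num
    have h := two_mul_add_one_mul_centralBinom_sq_le (m + 1)
    rw [hbinom] at h
    rw [show (2 * m + 1) / 2 = m by lia]
    nlinarith [sq_nonneg ((2 * m + 1).choose m)]

lemma choose_half_div_two_pow_le (n : ℕ) :
    (n.choose (n / 2) : ℝ) / 2 ^ n ≤ 1 / √(n + 1) := by
  have h : ((n : ℝ) + 1) * n.choose (n / 2) ^ 2 ≤ 4 ^ n := mod_cast succ_mul_choose_half_sq_le n
  rw [div_le_div_iff₀ (by positivity) (by positivity), one_mul]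
  refine (sq_le_sq₀ (by positivity) (by positivity)).1 ?_
  calc (n.choose (n / 2) * √(n + 1) : ℝ) ^ 2
      = (n + 1) * n.choose (n / 2) ^ 2 := by
        rw [mul_pow, Real.sq_sqrt (by positivity), mul_comm]
    _ ≤ 4 ^ n := h
    _ = (2 ^ n) ^ 2 := by rw [← pow_mul, mul_comm, pow_mul]; norm_num

variable {ι G : Type*} [Fintype ι] [AddCommGroup G] [LinearOrder G] [IsOrderedAddMonoid G]
  {v : ι → G}

lemma units_smul_eq_ite_abs (ε : ℤˣ) {a : G} (ha : a ≠ 0) :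
    ε • a = if 0 < ε • a then |a| else -|a| := by
  rcases Int.units_eq_one_or ε with rfl | rfl <;> rcases ha.lt_or_gt with h | h <;>
    simp [Units.smul_def, abs_of_neg, abs_of_pos, h, h.le]

lemma sum_units_smul_lt_of_ssubset (hv : ∀ i, v i ≠ 0) {x y : ι → ℤˣ}
    (hxy : ({i | 0 < x i • v i} : Finset ι) ⊂ ({i | 0 < y i • v i} : Finset ι)) :
    ∑ i, x i • v i < ∑ i, y i • v i := by
  have habs : ∀ i, -|v i| < |v i| := fun i => neg_lt_self (abs_pos.2 (hv i))
  have hsub : ∀ i, 0 < x i • v i → 0 < y i • v i := fun i hi => by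
    simpa using hxy.1 (by simpa using hi)
  obtain ⟨j, hjy, hjx⟩ := Finset.exists_of_ssubset hxy
  simp only [Finset.mem_filter_univ] at hjy hjx
  refine Finset.sum_lt_sum (fun i _ => ?_) ⟨j, Finset.mem_univ j, ?_⟩
  · rw [units_smul_eq_ite_abs _ (hv i), units_smul_eq_ite_abs (y i) (hv i)]
    split_ifs with hx hy hy
    exacts [le_rfl, absurd (hsub i hx) hy, (habs i).le, le_rfl]
  · rw [units_smul_eq_ite_abs _ (hv j), units_smul_eq_ite_abs (y j) (hv j), if_neg hjx, if_pos hjy]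
    exact habs j

-- The sets of indices of the positive terms `x i • v i`, for the sign vectors `x` with a given sum,
-- form an antichain, to which Sperner's theorem applies.
lemma proportion_sum_units_smul_eq_le (hv : ∀ i, v i ≠ 0) (t : G) :
    proportion {x : ι → ℤˣ | ∑ i, x i • v i = t} ≤ 1 / √(Fintype.card ι + 1) := by
  classical
  let pos : (ι → ℤˣ) → Finset ι := fun x => {i | 0 < x i • v i}
  have hinj : Function.Injective pos := fun x y hxy => funext fun i => by
    have hiff : 0 < x i • v i ↔ 0 < y i • v i := by simpa [pos] using Finset.ext_iff.1 hxy i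
    have hsmul : x i • v i = y i • v i := by
      rw [units_smul_eq_ite_abs _ (hv i), units_smul_eq_ite_abs (y i) (hv i)]
      simp only [hiff]
    exact Units.val_injective (smul_left_injective ℤ (hv i) hsmul)
  let E : Finset (ι → ℤˣ) := {x | ∑ i, x i • v i = t}
  have hanti : IsAntichain (· ⊆ ·) (E.image pos : Set (Finset ι)) := by
    intro A hA B hB hne hsub
    obtain ⟨x, hx, rfl⟩ := Finset.mem_image.1 hA
    obtain ⟨y, hy, rfl⟩ := Finset.mem_image.1 hB
    refine (sum_units_smul_lt_of_ssubset hv (hsub.ssubset_of_ne hne)).ne ?_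
    rw [(Finset.mem_filter.1 hx).2, (Finset.mem_filter.1 hy).2]
  have hcard : {x : ι → ℤˣ | ∑ i, x i • v i = t}.ncard ≤
      (Fintype.card ι).choose (Fintype.card ι / 2) := by
    simpa [E, Finset.card_image_of_injective _ hinj, Set.ncard_eq_toFinset_card'] using
      hanti.sperner
  refine le_trans ?_ (choose_half_div_two_pow_le (Fintype.card ι))
  rw [proportion, Nat.card_fun, Nat.card_eq_fintype_card, Nat.card_eq_fintype_card,
    Fintype.card_units_int, Nat.cast_pow, Nat.cast_two]
  gcongr

lemma proportion_sum_units_smul_eq_le_of_le_ncard_support {d : ℕ}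
    (hd : d ≤ (Function.support v).ncard) (t : G) :
    proportion {x : ι → ℤˣ | ∑ i, x i • v i = t} ≤ 1 / √(d + 1) := by
  classical
  have hval := Subtype.val_injective (p := (· ∈ Function.support v))
  refine proportion_le_of_forall_extend hval fun y => ?_
  have hsum : ∀ z : Function.support v → ℤˣ,
      ∑ i, Function.extend Subtype.val z y i • v i = ∑ i, z i • v i := fun z =>
    (Fintype.sum_of_injective _ hval _ _
      (fun i hi => by
        rw [Subtype.range_coe] at hi
        rw [Function.notMem_support.1 hi, smul_zero])
      fun i => by rw [hval.extend_apply]).symm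
  simp only [Set.mem_ofPred_eq, hsum]
  refine (proportion_sum_units_smul_eq_le (v := fun i : Function.support v => v i) Subtype.prop
    t).trans ?_
  rw [← Nat.card_eq_fintype_card, Nat.card_coe_set_eq]
  gcongr

end LittlewoodOfford

section SignMatrices

/-- The embedding of the signs `{1, -1}`, encoded as the units of `ℤ`, into the reals. -/
def signToReal : ℤˣ →* ℝ :=
  (Int.castRingHom ℝ : ℤ →* ℝ).comp (Units.coeHom ℤ)

lemma signToReal_injective : Function.Injective signToReal :=
  Int.cast_injective.comp Units.val_injective

lemma signToReal_mul_eq_units_smul (ε : ℤˣ) (a : ℝ) : signToReal ε * a = ε • a := by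
  rw [Units.smul_def, zsmul_eq_mul]
  rfl

lemma exists_ne_zero_forall_dotProduct_eq_zero {K κ : Type*} [Field K] [Fintype κ]
    {W : Submodule K (κ → K)} (hW : W ≠ ⊤) : ∃ v ≠ 0, ∀ w ∈ W, v ⬝ᵥ w = 0 := by
  classical
  obtain ⟨φ, hφ, hWφ⟩ := Submodule.exists_le_ker_of_lt_top W hW.lt_top
  refine ⟨(dotProductEquiv K κ).symm φ, by simpa using hφ, fun w hw => ?_⟩
  rw [← dotProductEquiv_apply_apply, LinearEquiv.apply_symm_apply]
  exact hWφ hw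

lemma submatrix_val_updateRow_of_notMem {ι κ α : Type*} [DecidableEq ι] {t : Finset ι} {i : ι}
    (hi : i ∉ t) (A : Matrix ι κ α) (x : κ → α) :
    (A.updateRow i x).submatrix ((↑) : t → ι) id = A.submatrix (↑) id :=
  Matrix.ext fun k _ => congrFun (updateRow_ne (ne_of_mem_of_not_mem k.2 hi)) _

variable {ι κ : Type*} [Fintype κ] {d : ℕ}

lemma proportion_signToReal_comp_mem_submodule_le {W : Submodule ℝ (κ → ℝ)} (hW : W ≠ ⊤)
    (hd : ∀ v ≠ 0, (∀ w ∈ W, v ⬝ᵥ w = 0) → d ≤ (Function.support v).ncard) :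
    proportion {x : κ → ℤˣ | signToReal ∘ x ∈ W} ≤ 1 / √(d + 1) := by
  obtain ⟨v, hv, hvW⟩ := exists_ne_zero_forall_dotProduct_eq_zero hW
  refine (proportion_mono fun x hx => ?_).trans
    (proportion_sum_units_smul_eq_le_of_le_ncard_support (hd v hv hvW) 0)
  rw [Set.mem_ofPred_eq, ← hvW _ hx, dotProduct_comm]
  simp only [dotProduct, Function.comp_apply, signToReal_mul_eq_units_smul]

variable [Finite ι] {s t : Finset ι}

lemma proportion_row_mem_span_and_colsIndep_le {i : ι} (hts : t ⊆ s) (hi : i ∉ s)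
    (hs : s.card < Fintype.card κ) (hd : d ≤ Fintype.card κ) :
    proportion {M : Matrix ι κ ℤˣ |
      signToReal ∘ M i ∈ Submodule.span ℝ ((M.map signToReal).row '' s) ∧
        ColsIndep d ((M.map signToReal).submatrix ((↑) : t → ι) id)} ≤ 1 / √(d + 1) := by
  classical
  refine proportion_le_of_forall_updateRow i fun M => ?_
  simp only [Set.mem_ofPred_eq, map_updateRow, updateRow_self,
    image_row_updateRow_of_notMem (Finset.mem_coe.not.2 hi),
    submatrix_val_updateRow_of_notMem (Finset.notMem_mono hts hi)]
  set A := M.map signToReal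
  by_cases hA : ColsIndep d (A.submatrix ((↑) : t → ι) id)
  · simp only [hA, and_true]
    refine proportion_signToReal_comp_mem_submodule_le (fun htop => ?_) fun v hv hvs => ?_
    · have hrank := finrank_span_image_finset_le_card (K := ℝ) A.row s
      rw [htop, finrank_top, Module.finrank_fintype_fun_eq_card] at hrank
      exact hs.not_ge hrank
    · refine (hA.lt_ncard_support hd hv (funext fun k => ?_)).le
      rw [mulVec, dotProduct_comm]
      exact hvs _ (Submodule.subset_span ⟨k, hts k.2, rfl⟩)
  · simp only [hA, and_false, Set.ofPred_false, proportion_empty]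
    positivity

lemma proportion_not_linearIndepOn_union_and_colsIndep_le [DecidableEq ι]
    (hd : d ≤ Fintype.card κ) (u : Finset ι) (hut : Disjoint t u)
    (htu : (t ∪ u).card ≤ Fintype.card κ) :
    proportion {M : Matrix ι κ ℤˣ | ¬ LinearIndepOn ℝ (M.map signToReal).row (t ∪ u : Finset ι) ∧
        ColsIndep d ((M.map signToReal).submatrix ((↑) : t → ι) id)} ≤
      2 ^ t.card / 2 ^ Fintype.card κ + u.card * (1 / √(d + 1)) := by
  induction u using Finset.induction_on with
  | empty =>
    rw [Finset.union_empty, Finset.card_empty, Nat.cast_zero, zero_mul, add_zero]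
    refine (proportion_mono fun M hM => hM.1).trans
      ((proportion_not_linearIndepOn_row_le signToReal_injective t).trans_eq ?_)
    rw [Fintype.card_units_int, Nat.cast_two]
  | insert i u hi ih =>
    rw [Finset.disjoint_insert_right] at hut
    have hitu : i ∉ t ∪ u := by simp [hi, hut.1]
    rw [Finset.union_insert, Finset.card_insert_of_notMem hitu] at htu
    let E : Set (Matrix ι κ ℤˣ) := {M |
      ColsIndep d ((M.map signToReal).submatrix ((↑) : t → ι) id)}
    have hsplit : {M : Matrix ι κ ℤˣ |
          ¬ LinearIndepOn ℝ (M.map signToReal).row (t ∪ insert i u : Finset ι) ∧ M ∈ E} ⊆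
        {M | ¬ LinearIndepOn ℝ (M.map signToReal).row (t ∪ u : Finset ι) ∧ M ∈ E} ∪
        {M | signToReal ∘ M i ∈
          Submodule.span ℝ ((M.map signToReal).row '' (t ∪ u : Finset ι)) ∧ M ∈ E} := by
      rintro M ⟨hM, hE⟩
      rw [Finset.union_insert, Finset.coe_insert, linearIndepOn_insert (Finset.mem_coe.not.2 hitu),
        not_and_not_right] at hM
      exact or_iff_not_imp_left.2 fun h => ⟨hM (by_contra fun h' => h ⟨h', hE⟩), hE⟩
    calc proportion {M : Matrix ι κ ℤˣ |
          ¬ LinearIndepOn ℝ (M.map signToReal).row (t ∪ insert i u : Finset ι) ∧ M ∈ E}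
        ≤ _ := proportion_mono hsplit
      _ ≤ _ := proportion_union_le _ _
      _ ≤ 2 ^ t.card / 2 ^ Fintype.card κ + u.card * (1 / √(d + 1)) + 1 / √(d + 1) :=
          add_le_add (ih hut.2 (by lia)) (proportion_row_mem_span_and_colsIndep_le
            Finset.subset_union_left hitu (by lia) hd)
      _ = _ := by
          rw [Finset.card_insert_of_notMem hi]
          push_cast
          ring

end SignMatrices

section Singular

lemma proportion_not_colsIndep_submatrix_le {ι κ : Type*} [Finite ι] [Fintype κ]
    (t : Finset ι) (d : ℕ) :
    proportion {M : Matrix ι κ ℤˣ |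
        ¬ ColsIndep d ((M.map signToReal).submatrix ((↑) : t → ι) id)} ≤
      (Fintype.card κ).choose d * (2 ^ d / 2 ^ t.card) := by
  have h := proportion_not_colsIndep_le (ι := t) (κ := κ) signToReal_injective d
  rw [Fintype.card_units_int, Fintype.card_coe, Nat.cast_two] at h
  exact (proportion_comp_mem_le Subtype.val_injective {N : t → κ → ℤˣ |
    ¬ ColsIndep d (Matrix.map N signToReal)}).trans h

lemma proportion_not_isUnit_le {ι : Type*} [Fintype ι] [DecidableEq ι] {d : ℕ}
    (hd : d ≤ Fintype.card ι) (t : Finset ι) :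
    proportion {M : Matrix ι ι ℤˣ | ¬ IsUnit (M.map signToReal)} ≤
      (Fintype.card ι).choose d * (2 ^ d / 2 ^ t.card) +
        (2 ^ t.card / 2 ^ Fintype.card ι + tᶜ.card * (1 / √(d + 1))) := by
  have hdep := proportion_not_linearIndepOn_union_and_colsIndep_le hd tᶜ disjoint_compl_right
    (Finset.card_le_univ _)
  refine (proportion_mono fun M hM => ?_).trans ((proportion_union_le _ _).trans
    (add_le_add (proportion_not_colsIndep_submatrix_le t d) hdep))
  have hrows : ¬ LinearIndepOn ℝ (M.map signToReal).row (t ∪ tᶜ : Finset ι) := by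
    rwa [Finset.union_compl, Finset.coe_univ, linearIndepOn_univ_iff,
      linearIndependent_rows_iff_isUnit]
  exact or_iff_not_imp_left.2 fun h => ⟨hrows, not_not.1 h⟩

/-- The proportion of singular matrices among the `n × n` sign matrices. -/
noncomputable def singularProportion (n : ℕ) : ℝ :=
  proportion {M : Matrix (Fin n) (Fin n) ℤˣ | ¬ IsUnit (M.map signToReal)}

lemma singularProportion_le {n k d : ℕ} (hk : k ≤ n) (hd : d ≤ n) :
    singularProportion n ≤
      2 ^ (d + k) * ((n : ℝ) ^ d / 2 ^ n) + ((1 / 2) ^ k + k * (1 / √(d + 1))) := by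
  obtain ⟨t, -, ht⟩ := Finset.exists_subset_card_eq (s := (Finset.univ : Finset (Fin n)))
    (n := n - k) (by simp)
  have htc : tᶜ.card = k := by
    rw [Finset.card_compl, Fintype.card_fin, ht]
    lia
  have hchoose : (n.choose d : ℝ) ≤ (n : ℝ) ^ d := mod_cast Nat.choose_le_pow n d
  have hpow : (2 : ℝ) ^ (n - k) = 2 ^ n / 2 ^ k := pow_sub₀ _ two_ne_zero hk
  have h := proportion_not_isUnit_le (d := d) (by simpa using hd) t
  rw [ht, htc, hpow, Fintype.card_fin] at h
  refine h.trans (add_le_add ?_ (add_le_add (le_of_eq ?_) le_rfl))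
  · calc (n.choose d : ℝ) * (2 ^ d / (2 ^ n / 2 ^ k))
        ≤ (n : ℝ) ^ d * (2 ^ d / (2 ^ n / 2 ^ k)) := by gcongr
      _ = 2 ^ (d + k) * ((n : ℝ) ^ d / 2 ^ n) := by
          rw [pow_add]
          field_simp
  · rw [_root_.one_div_pow]
    field_simp

lemma tendsto_singularProportion :
    Filter.Tendsto singularProportion Filter.atTop (nhds 0) := by
  refine tendsto_order.2 ⟨fun ε hε => .of_forall fun n => hε.trans_le (proportion_nonneg _),
    fun ε hε => ?_⟩
  obtain ⟨k, hk⟩ : ∃ k : ℕ, (1 / 2 : ℝ) ^ k < ε / 3 :=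
    exists_pow_lt_of_lt_one (by positivity) (by norm_num)
  obtain ⟨d, hd⟩ : ∃ d : ℕ, (k : ℝ) * (1 / √(d + 1)) < ε / 3 := by
    have hsqrt : Filter.Tendsto (fun d : ℕ => √((d : ℝ) + 1)) Filter.atTop Filter.atTop :=
      Real.tendsto_sqrt_atTop.comp
        (Filter.tendsto_atTop_add_const_right _ _ tendsto_natCast_atTop_atTop)
    have hlim := (hsqrt.const_div_atTop 1).const_mul (k : ℝ)
    rw [mul_zero] at hlim
    exact (hlim.eventually_lt_const (by positivity)).exists
  have hsparse : Filter.Tendsto (fun n : ℕ => 2 ^ (d + k) * ((n : ℝ) ^ d / 2 ^ n))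
      Filter.atTop (nhds 0) := by
    simpa using (tendsto_pow_const_div_const_pow_of_one_lt d (one_lt_two (α := ℝ))).const_mul
      (2 ^ (d + k))
  filter_upwards [hsparse.eventually_lt_const (by positivity : 0 < ε / 3),
    Filter.eventually_ge_atTop k, Filter.eventually_ge_atTop d] with n hn hkn hdn
  linarith [singularProportion_le hkn hdn]

end Singular

section Cramer

variable {ι : Type*} [Fintype ι] [DecidableEq ι]

lemma inv_mulVec_apply_eq_zero_iff {K : Type*} [Field K] {A : Matrix ι ι K}
    (hA : IsUnit A) (b : ι → K) (i : ι) :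
    (A⁻¹ *ᵥ b) i = 0 ↔ ¬ IsUnit (A.updateCol i b) := by
  have hdet : IsUnit A.det := (isUnit_iff_isUnit_det A).1 hA
  rw [isUnit_iff_isUnit_det, isUnit_iff_ne_zero, not_not, ← cramer_apply,
    ← det_smul_inv_mulVec_eq_cramer A b hdet, Pi.smul_apply, smul_eq_zero_iff_right hdet.ne_zero]

-- Multiplying every row by its `i`-th entry turns column `i` into `1`; restoring the old column
-- `i` afterwards makes this an involution, and row signs do not affect singularity.
lemma proportion_not_isUnit_updateCol_one (i : ι) :
    proportion {M : Matrix ι ι ℤˣ | ¬ IsUnit ((M.map signToReal).updateCol i 1)} =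
      proportion {M : Matrix ι ι ℤˣ | ¬ IsUnit (M.map signToReal)} := by
  let φ : Matrix ι ι ℤˣ → Matrix ι ι ℤˣ :=
    fun M => Matrix.of fun a b => M a i * M.updateCol i 1 a b
  have hφ : Function.Involutive φ := fun M => Matrix.ext fun a b => by
    rcases eq_or_ne b i with rfl | hb
    · simp [φ]
    · simp [φ, hb, ← mul_assoc, Int.units_mul_self]
  have hmap : ∀ M, (φ M).map signToReal =
      Matrix.of fun a b => signToReal (M a i) * (M.map signToReal).updateCol i 1 a b :=
    fun M => Matrix.ext fun a b => by
      rcases eq_or_ne b i with rfl | hb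
      · simp [φ]
      · simp [φ, hb]
  have hunit : ∀ M, IsUnit ((φ M).map signToReal) ↔ IsUnit ((M.map signToReal).updateCol i 1) :=
    fun M => by
      have hsigns : IsUnit (∏ a, signToReal (M a i)) := by
        rw [← map_prod]
        exact (Group.isUnit _).map signToReal
      rw [isUnit_iff_isUnit_det, isUnit_iff_isUnit_det, hmap, det_mul_column, IsUnit.mul_iff,
        and_iff_right hsigns]
  rw [← proportion_preimage_equiv hφ.toPerm {M | ¬ IsUnit (M.map signToReal)}]
  simp only [Set.preimage_ofPred_eq, Function.Involutive.coe_toPerm, hunit]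

end Cramer

section SignMatrixCount

variable {n : ℕ}

lemma isSignMatrix_iff_exists_map_signToReal {C : Matrix (Fin n) (Fin n) ℝ} :
    IsSignMatrix C ↔ ∃ M : Matrix (Fin n) (Fin n) ℤˣ, M.map signToReal = C := by
  constructor
  · intro hC
    have hentry : ∀ i j, ∃ ε : ℤˣ, signToReal ε = C i j := fun i j => by
      rcases hC i j with h | h
      · exact ⟨1, by simp [h]⟩
      · exact ⟨-1, by simp [h, signToReal]⟩
    choose M hM using hentry
    exact ⟨M, Matrix.ext hM⟩
  · rintro ⟨M, rfl⟩ i j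
    rcases Int.units_eq_one_or (M i j) with h | h <;> simp [h, signToReal]

lemma card_isSignMatrix_and (P : Matrix (Fin n) (Fin n) ℝ → Prop) :
    Nat.card {C : Matrix (Fin n) (Fin n) ℝ // IsSignMatrix C ∧ P C} =
      {M : Matrix (Fin n) (Fin n) ℤˣ | P (M.map signToReal)}.ncard := by
  have himage : {C | IsSignMatrix C ∧ P C} =
      (fun M : Matrix (Fin n) (Fin n) ℤˣ => M.map signToReal) '' {M | P (M.map signToReal)} := by
    ext C
    simp only [isSignMatrix_iff_exists_map_signToReal, Set.mem_image, Set.mem_ofPred_eq]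
    constructor
    · rintro ⟨⟨M, rfl⟩, hM⟩
      exact ⟨M, hM, rfl⟩
    · rintro ⟨M, hM, rfl⟩
      exact ⟨⟨M, rfl⟩, hM⟩
  rw [← Set.ncard_image_of_injective _ (Matrix.map_injective signToReal_injective), ← himage]
  rfl

lemma qn_eq_proportion_div_proportion (i : Fin n) :
    qn n i =
      proportion {M : Matrix (Fin n) (Fin n) ℤˣ |
        IsUnit (M.map signToReal) ∧ ((M.map signToReal)⁻¹ *ᵥ 1) i = 0} /
      proportion {M : Matrix (Fin n) (Fin n) ℤˣ | IsUnit (M.map signToReal)} := by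
  rw [qn, card_isSignMatrix_and fun C => IsUnit C ∧ (C⁻¹ *ᵥ 1) i = 0,
    card_isSignMatrix_and fun C => IsUnit C]
  exact (div_div_div_cancel_right₀ (Nat.cast_ne_zero.2 Nat.card_pos.ne') _ _).symm

lemma qn_nonneg (i : Fin n) : 0 ≤ qn n i := by
  unfold qn
  positivity

lemma qn_le_div_one_sub (i : Fin n) :
    qn n i ≤ singularProportion n / (1 - singularProportion n) := by
  have hunits : 1 - singularProportion n =
      proportion {M : Matrix (Fin n) (Fin n) ℤˣ | IsUnit (M.map signToReal)} := by
    rw [singularProportion, ← proportion_compl]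
    simp only [Set.compl_ofPred, not_not]
  rw [hunits, qn_eq_proportion_div_proportion, singularProportion,
    ← proportion_not_isUnit_updateCol_one i]
  refine div_le_div_of_nonneg_right (proportion_mono ?_) (proportion_nonneg _)
  rintro M ⟨hM, hzero⟩
  exact (inv_mulVec_apply_eq_zero_iff hM 1 i).1 hzero

end SignMatrixCount

/-- Lemma (Lemma `lemma-aux2`): `lim_{n→∞} max_{1≤i≤n} q_n(i) = 0`. -/
theorem qn_max_tendsto_zero :
    Filter.Tendsto (fun n : ℕ => ⨆ i : Fin n, qn n i) Filter.atTop (nhds 0) := by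
  have hbound : Filter.Tendsto (fun n => singularProportion n / (1 - singularProportion n))
      Filter.atTop (nhds 0) := by
    have hdiv := tendsto_singularProportion.div (tendsto_singularProportion.const_sub 1) (by simp)
    rwa [zero_div] at hdiv
  refine squeeze_zero' (.of_forall fun n => Real.iSup_nonneg qn_nonneg) ?_ hbound
  filter_upwards [tendsto_singularProportion.eventually_le_const one_pos] with n hn
  exact Real.iSup_le qn_le_div_one_sub (div_nonneg (proportion_nonneg _) (sub_nonneg.2 hn))
end
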